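/- Maneuver-detection characterization: assume the initial covariance matrix Σ₀ is positive definite and the feasible set F(𝓜) is nonempty. Then the minimum over F(𝓜) of the total-Δv objective J(x, Δv) = Σ_{i=0}^{N} ‖Δv_i‖ equals 0 if and only if there exists a ballistic feasible solution, i.e. a point (x_0, …, x_N, Δv_0, …, Δv_N) ∈ F(𝓜) with Δv_i = 0 for all i = 0, …, N. -/

import Mathlib

open scoped RealInnerProductSpace

/-- The feasible set `F(𝓜)` of the convexified maneuver-detection problem:
states `x_0, …, x_N ∈ ℝ⁶` and impulses `Δv_0, …, Δv_N ∈ ℝ³` satisfying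
(i) the affine state-transition constraints
    `x_{i+1} = x̃_{i+1} + R_i (x_i − x̃_i) + M_i Δv_i`,
(ii) the per-node impulse bounds `‖Δv_i‖ ≤ Δv_max`, and
(iii) the two Mahalanobis ellipsoid constraints
    `(1/2)(x_0 − μ₀)ᵀΣ₀(x_0 − μ₀) ≤ 𝓜` and `(1/2)(x_N − μ_f)ᵀΣ_f(x_N − μ_f) ≤ 𝓜`. -/
noncomputable def feasibleSet (N : ℕ)
    (xref : Fin (N + 1) → EuclideanSpace ℝ (Fin 6))
    (R : Fin N → Matrix (Fin 6) (Fin 6) ℝ)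
    (M : Fin N → Matrix (Fin 6) (Fin 3) ℝ)
    (μ0 μf : EuclideanSpace ℝ (Fin 6))
    (Sigma0 Sigmaf : Matrix (Fin 6) (Fin 6) ℝ)
    (𝓜 Δvmax : ℝ) :
    Set ((Fin (N + 1) → EuclideanSpace ℝ (Fin 6)) ×
      (Fin (N + 1) → EuclideanSpace ℝ (Fin 3))) :=
  {z | (∀ i : Fin N,
          z.1 i.succ = xref i.succ
            + Matrix.toEuclideanLin (R i) (z.1 i.castSucc - xref i.castSucc)
            + Matrix.toEuclideanLin (M i) (z.2 i.castSucc))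
    ∧ (∀ i : Fin (N + 1), ‖z.2 i‖ ≤ Δvmax)
    ∧ (1 / 2) * ⟪z.1 0 - μ0, Matrix.toEuclideanLin Sigma0 (z.1 0 - μ0)⟫ ≤ 𝓜
    ∧ (1 / 2) * ⟪z.1 (Fin.last N) - μf,
        Matrix.toEuclideanLin Sigmaf (z.1 (Fin.last N) - μf)⟫ ≤ 𝓜}

/-- The total-Δv objective `J(x, Δv) = ∑ i, ‖Δv_i‖`. -/
noncomputable def totalDv (N : ℕ)
    (z : (Fin (N + 1) → EuclideanSpace ℝ (Fin 6)) ×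
      (Fin (N + 1) → EuclideanSpace ℝ (Fin 3))) : ℝ :=
  ∑ i, ‖z.2 i‖

/-!
Rolling out the dynamics exhibits the admissible state-impulse pairs as the continuous image of a
closed set of initial states and impulse sequences, so they form a compact set as soon as the
initial states and the impulses range over compact sets. Positive definiteness of `Σ₀` makes the
initial ellipsoid compact: writing `Σ₀ = BᵀB` with `B` invertible, it is the preimage of a ball
under the closed embedding `x ↦ B (x - μ₀)`. The total-Δv is therefore attained, and a sum of norms
vanishes only when every impulse does.
-/

lemma sInf_image_eq_zero_iff_of_isCompact {α : Type*} [TopologicalSpace α] {s : Set α} {g : α → ℝ}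
    (hs : IsCompact s) (hne : s.Nonempty) (hg : ContinuousOn g s) (hnonneg : ∀ a ∈ s, 0 ≤ g a) :
    sInf (g '' s) = 0 ↔ ∃ a ∈ s, g a = 0 := by
  constructor
  · intro h
    obtain ⟨a, ha, hmin⟩ := hs.exists_sInf_image_eq hne hg
    exact ⟨a, ha, hmin.symm.trans h⟩
  · rintro ⟨a, ha, hzero⟩
    have hleast : IsLeast (g '' s) 0 := ⟨⟨a, ha, hzero⟩, Set.forall_mem_image.2 hnonneg⟩
    exact hleast.csInf_eq

section ControlledTrajectory

variable {X V : Type*} {N : ℕ}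

/-- The states `x_0, …, x_N` generated from the pair `(x_0, Δv)` by the dynamics
`x_{i+1} = f_i (x_i, Δv_i)`. The last impulse `Δv_N` acts after the final state. -/
def rollout (f : Fin N → X × V → X) (p : X × (Fin (N + 1) → V)) : Fin (N + 1) → X :=
  Fin.induction p.1 fun i x => f i (x, p.2 i.castSucc)

/-- The pairs `(x, Δv)` of state and impulse sequences that obey the dynamics
`x_{i+1} = f_i (x_i, Δv_i)`, start in `K`, end in `T` and satisfy `Δv_i ∈ U i` at every node. -/
def admissibleSet (f : Fin N → X × V → X) (K : Set X) (U : Fin (N + 1) → Set V) (T : Set X) :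
    Set ((Fin (N + 1) → X) × (Fin (N + 1) → V)) :=
  {z | (∀ i : Fin N, z.1 i.succ = f i (z.1 i.castSucc, z.2 i.castSucc)) ∧
    (∀ i, z.2 i ∈ U i) ∧ z.1 0 ∈ K ∧ z.1 (Fin.last N) ∈ T}

lemma rollout_eq_of_forall_succ {f : Fin N → X × V → X} {x : Fin (N + 1) → X}
    {u : Fin (N + 1) → V} (h : ∀ i : Fin N, x i.succ = f i (x i.castSucc, u i.castSucc)) :
    rollout f (x 0, u) = x := by
  funext i
  induction i using Fin.induction with
  | zero => rfl
  | succ i ih => rw [h i, ← ih]; rfl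

lemma admissibleSet_eq_image_rollout (f : Fin N → X × V → X) (K : Set X)
    (U : Fin (N + 1) → Set V) (T : Set X) :
    admissibleSet f K U T = (fun p => (rollout f p, p.2)) ''
      (K ×ˢ Set.univ.pi U ∩ {p | rollout f p (Fin.last N) ∈ T}) := by
  ext ⟨x, u⟩
  constructor
  · rintro ⟨hdyn, hU, hK, hT⟩
    have hx : rollout f (x 0, u) = x := rollout_eq_of_forall_succ hdyn
    exact ⟨(x 0, u), ⟨⟨hK, fun i _ => hU i⟩, by simpa only [Set.mem_ofPred_eq, hx] using hT⟩,
      by simp only [hx]⟩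
  · rintro ⟨p, ⟨⟨hK, hU⟩, hT⟩, ⟨⟩⟩
    exact ⟨fun _ => rfl, fun i => hU i trivial, hK, hT⟩

lemma continuous_rollout [TopologicalSpace X] [TopologicalSpace V] {f : Fin N → X × V → X}
    (hf : ∀ i, Continuous (f i)) : Continuous (rollout f) := by
  refine continuous_pi fun i => ?_
  induction i using Fin.induction with
  | zero => exact continuous_fst
  | succ i ih =>
    exact (hf i).comp (ih.prodMk ((continuous_apply i.castSucc).comp continuous_snd))

lemma isCompact_admissibleSet [TopologicalSpace X] [TopologicalSpace V] {f : Fin N → X × V → X}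
    (hf : ∀ i, Continuous (f i)) {K : Set X} (hK : IsCompact K) {U : Fin (N + 1) → Set V}
    (hU : ∀ i, IsCompact (U i)) {T : Set X} (hT : IsClosed T) :
    IsCompact (admissibleSet f K U T) := by
  have hroll : Continuous (rollout f) := continuous_rollout hf
  have hterminal : IsClosed {p | rollout f p (Fin.last N) ∈ T} :=
    hT.preimage ((continuous_apply (Fin.last N)).comp hroll)
  rw [admissibleSet_eq_image_rollout]
  exact ((hK.prod (isCompact_univ_pi hU)).inter_right hterminal).image
    (hroll.prodMk continuous_snd)

theorem maneuver_detection_characterization_general [TopologicalSpace X] [NormedAddCommGroup V]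
    {f : Fin N → X × V → X} (hf : ∀ i, Continuous (f i)) {K : Set X} (hK : IsCompact K)
    {U : Fin (N + 1) → Set V} (hU : ∀ i, IsCompact (U i)) {T : Set X} (hT : IsClosed T)
    (hne : (admissibleSet f K U T).Nonempty) :
    sInf ((fun z => ∑ i, ‖z.2 i‖) '' admissibleSet f K U T) = 0 ↔
      ∃ z ∈ admissibleSet f K U T, ∀ i, z.2 i = 0 := by
  have hzero (u : Fin (N + 1) → V) : ∑ i, ‖u i‖ = 0 ↔ ∀ i, u i = 0 := by
    simp [Finset.sum_eq_zero_iff_of_nonneg]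
  rw [sInf_image_eq_zero_iff_of_isCompact (isCompact_admissibleSet hf hK hU hT) hne
    (by fun_prop) fun z _ => Finset.sum_nonneg fun i _ => norm_nonneg (z.2 i)]
  simp only [hzero]

end ControlledTrajectory

section Ellipsoid

open scoped Matrix

variable {𝕜 m n : Type*} [RCLike 𝕜] [Fintype n] [DecidableEq n]

/-- The Mahalanobis ellipsoid `(1/2)(x - μ)ᵀ S (x - μ) ≤ r`. As in the feasible set, `S` weights the
quadratic form directly instead of through its inverse. -/
def mahalanobisEllipsoid (μ : EuclideanSpace ℝ n) (S : Matrix n n ℝ) (r : ℝ) :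
    Set (EuclideanSpace ℝ n) :=
  {x | (1 / 2) * ⟪x - μ, Matrix.toEuclideanLin S (x - μ)⟫ ≤ r}

lemma continuous_toEuclideanLin (A : Matrix m n 𝕜) : Continuous (Matrix.toEuclideanLin A) :=
  (PiLp.continuous_toLp 2 _).comp (continuous_const.matrix_mulVec (PiLp.continuous_ofLp 2 _))

lemma isClosed_mahalanobisEllipsoid (μ : EuclideanSpace ℝ n) (S : Matrix n n ℝ) (r : ℝ) :
    IsClosed (mahalanobisEllipsoid μ S r) := by
  have hS := continuous_toEuclideanLin S
  exact isClosed_le (by fun_prop) continuous_const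

lemma inner_toEuclideanLin_conjTranspose_mul_self [Fintype m] (B : Matrix m n ℝ)
    (x : EuclideanSpace ℝ n) :
    ⟪x, Matrix.toEuclideanLin (Bᴴ * B) x⟫ = ‖Matrix.toEuclideanLin B x‖ ^ 2 := by
  classical
  rw [Matrix.toLpLin_mul (q := 2), LinearMap.comp_apply,
    Matrix.toEuclideanLin_conjTranspose_eq_adjoint, LinearMap.adjoint_inner_right,
    real_inner_self_eq_norm_sq]

open scoped ComplexOrder MatrixOrder Matrix.Norms.L2Operator in
lemma exists_isUnit_eq_conjTranspose_mul_self {S : Matrix n n 𝕜} (hS : S.PosDef) :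
    ∃ B : Matrix n n 𝕜, IsUnit B ∧ S = Bᴴ * B :=
  CStarAlgebra.isStrictlyPositive_iff_eq_star_mul_self.1 hS.isStrictlyPositive

lemma isClosedEmbedding_toEuclideanLin {B : Matrix n n 𝕜} (hB : IsUnit B) :
    Topology.IsClosedEmbedding (Matrix.toEuclideanLin B) := by
  refine LinearMap.isClosedEmbedding_of_injective (LinearMap.ker_eq_bot.2 fun x y hxy => ?_)
  exact WithLp.ofLp_injective 2 (Matrix.mulVec_injective_of_isUnit hB (congrArg WithLp.ofLp hxy))

lemma isCompact_mahalanobisEllipsoid (μ : EuclideanSpace ℝ n) {S : Matrix n n ℝ} (hS : S.PosDef)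
    (r : ℝ) : IsCompact (mahalanobisEllipsoid μ S r) := by
  obtain ⟨B, hB, rfl⟩ := exists_isUnit_eq_conjTranspose_mul_self hS
  have hembed : Topology.IsClosedEmbedding fun x => Matrix.toEuclideanLin B (x - μ) :=
    (isClosedEmbedding_toEuclideanLin hB).comp (Homeomorph.subRight μ).isClosedEmbedding
  refine (hembed.isCompact_preimage (isCompact_closedBall 0 √(2 * r))).of_isClosed_subset
    (isClosed_mahalanobisEllipsoid μ _ r) fun x hx => ?_
  rw [mahalanobisEllipsoid, Set.mem_ofPred_eq, inner_toEuclideanLin_conjTranspose_mul_self] at hx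
  rw [Set.mem_preimage, mem_closedBall_zero_iff]
  exact Real.le_sqrt_of_sq_le (by linarith)

/-- One step `(x, Δv) ↦ y' + A (x - y) + B Δv` of the dynamics linearized along a reference
trajectory passing from `y` to `y'`. -/
noncomputable def linearizedStep [Fintype m] [DecidableEq m] (y y' : EuclideanSpace ℝ n)
    (A : Matrix n n ℝ) (B : Matrix n m ℝ) (p : EuclideanSpace ℝ n × EuclideanSpace ℝ m) :
    EuclideanSpace ℝ n :=
  y' + Matrix.toEuclideanLin A (p.1 - y) + Matrix.toEuclideanLin B p.2

lemma continuous_linearizedStep [Fintype m] [DecidableEq m] (y y' : EuclideanSpace ℝ n)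
    (A : Matrix n n ℝ) (B : Matrix n m ℝ) : Continuous (linearizedStep y y' A B) := by
  have hA := continuous_toEuclideanLin A
  have hB := continuous_toEuclideanLin B
  unfold linearizedStep
  fun_prop

end Ellipsoid

lemma feasibleSet_eq_admissibleSet (N : ℕ) (xref : Fin (N + 1) → EuclideanSpace ℝ (Fin 6))
    (R : Fin N → Matrix (Fin 6) (Fin 6) ℝ) (M : Fin N → Matrix (Fin 6) (Fin 3) ℝ)
    (μ0 μf : EuclideanSpace ℝ (Fin 6)) (Sigma0 Sigmaf : Matrix (Fin 6) (Fin 6) ℝ) (𝓜 Δvmax : ℝ) :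
    feasibleSet N xref R M μ0 μf Sigma0 Sigmaf 𝓜 Δvmax =
      admissibleSet (fun i => linearizedStep (xref i.castSucc) (xref i.succ) (R i) (M i))
        (mahalanobisEllipsoid μ0 Sigma0 𝓜) (fun _ => Metric.closedBall 0 Δvmax)
        (mahalanobisEllipsoid μf Sigmaf 𝓜) := by
  simp only [feasibleSet, admissibleSet, linearizedStep, mahalanobisEllipsoid,
    mem_closedBall_zero_iff, Set.mem_ofPred_eq]

/-- Maneuver-detection characterization: assume the initial covariance
matrix `Σ₀` is positive definite and the feasible set `F(𝓜)` is nonempty. Then the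
minimum (infimum) over `F(𝓜)` of the total-Δv objective `J(x, Δv) = ∑ i, ‖Δv_i‖`
equals `0` if and only if there exists a ballistic feasible solution, i.e. a point of
`F(𝓜)` with `Δv_i = 0` for all `i`. -/
theorem maneuver_detection_characterization (N : ℕ) (hN : 1 ≤ N)
    (xref : Fin (N + 1) → EuclideanSpace ℝ (Fin 6))
    (R : Fin N → Matrix (Fin 6) (Fin 6) ℝ)
    (M : Fin N → Matrix (Fin 6) (Fin 3) ℝ)
    (μ0 μf : EuclideanSpace ℝ (Fin 6))
    (Sigma0 Sigmaf : Matrix (Fin 6) (Fin 6) ℝ)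
    (hS0 : Sigma0.PosDef) (hS0symm : Sigma0.IsSymm)
    (hSf : Sigmaf.PosSemidef) (hSfsymm : Sigmaf.IsSymm)
    (Δvmax : ℝ) (hΔvmax : 0 < Δvmax)
    (𝓜 : ℝ) (h𝓜 : 0 ≤ 𝓜)
    (hne : (feasibleSet N xref R M μ0 μf Sigma0 Sigmaf 𝓜 Δvmax).Nonempty) :
    sInf (totalDv N '' feasibleSet N xref R M μ0 μf Sigma0 Sigmaf 𝓜 Δvmax) = 0 ↔
      ∃ z ∈ feasibleSet N xref R M μ0 μf Sigma0 Sigmaf 𝓜 Δvmax,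
        ∀ i : Fin (N + 1), z.2 i = 0 := by
  rw [feasibleSet_eq_admissibleSet] at hne ⊢
  exact maneuver_detection_characterization_general
    (fun i => continuous_linearizedStep (xref i.castSucc) (xref i.succ) (R i) (M i))
    (isCompact_mahalanobisEllipsoid μ0 hS0 𝓜) (fun _ => isCompact_closedBall 0 Δvmax)
    (isClosed_mahalanobisEllipsoid μf Sigmaf 𝓜) hne
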